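/- The function κ ↦ E(κ)/√(2+κ) is strictly decreasing on [0, ∞); in particular its derivative, which for κ > 0 equals (E(κ) - (1 + κ/2) F(κ))/(κ (2+κ)^{3/2}), is strictly negative for all κ > 0. -/

import Mathlib

/-!
Differentiating under the integral sign gives `E' = (E - F) / (2κ)`, and the formula for the
derivative of `E(κ)/√(2+κ)` is then the quotient rule. Its sign is that of `E - (1 + κ/2) F`.
Write `t = √(1 + κ sin²φ)` and `c = √(1 + κ/2)`. The integrand of `E - (1 + κ/2) F` is
`t - c²/t = (t² - c²)/t`, and `(t² - c²)/t ≤ (t² - c²)/c` because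
`(t² - c²)(1/t - 1/c) = -(t - c)²(t + c)/(tc)`. The right-hand side integrates to zero, since `sin²`
has mean `1/2` on `[0, π/2]`, and the inequality is strict at `φ = 0`. Strict monotonicity on the
closed half-line follows because `E` is continuous up to `κ = 0`.
-/

noncomputable section

open Real

/-- The complete elliptic-type integral `F(κ) = ∫₀^{π/2} dφ/√(1 + κ sin²φ)`. -/
def Fell (κ : ℝ) : ℝ := ∫ φ in (0:ℝ)..(π / 2), 1 / Real.sqrt (1 + κ * Real.sin φ ^ 2)

/-- The complete elliptic-type integral `E(κ) = ∫₀^{π/2} √(1 + κ sin²φ) dφ`. -/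
def Eell (κ : ℝ) : ℝ := ∫ φ in (0:ℝ)..(π / 2), Real.sqrt (1 + κ * Real.sin φ ^ 2)

theorem one_add_mul_sin_sq_pos {κ : ℝ} (hκ : 0 ≤ κ) (φ : ℝ) : 0 < 1 + κ * Real.sin φ ^ 2 := by
  positivity

theorem continuous_Eell : Continuous Eell := by
  unfold Eell
  apply intervalIntegral.continuous_parametric_intervalIntegral_of_continuous'
  simp only [Function.uncurry_def]
  fun_prop

theorem continuous_Fell_integrand {κ : ℝ} (hκ : 0 ≤ κ) :
    Continuous fun φ : ℝ => 1 / Real.sqrt (1 + κ * Real.sin φ ^ 2) :=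
  continuous_const.div (by fun_prop) fun φ =>
    (Real.sqrt_pos.2 (one_add_mul_sin_sq_pos hκ φ)).ne'

/-- Differentiation under the integral sign, with the derivative of the integrand bounded by `1` on
`κ > 0`; the result uses `κ sin²φ / t = t - 1/t` for `t = √(1 + κ sin²φ)`. -/
theorem hasDerivAt_Eell {κ : ℝ} (hκ : 0 < κ) :
    HasDerivAt Eell ((Eell κ - Fell κ) / (2 * κ)) κ := by
  have hcont : Continuous fun φ : ℝ =>
      Real.sin φ ^ 2 / (2 * Real.sqrt (1 + κ * Real.sin φ ^ 2)) :=
    (by fun_prop : Continuous fun φ : ℝ => Real.sin φ ^ 2).div (by fun_prop) fun φ =>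
      (mul_pos two_pos (Real.sqrt_pos.2 (one_add_mul_sin_sq_pos hκ.le φ))).ne'
  have key := intervalIntegral.hasDerivAt_integral_of_dominated_loc_of_deriv_le
    (μ := MeasureTheory.volume) (a := 0) (b := π / 2) (x₀ := κ) (s := Set.Ioi 0)
    (F := fun x φ => Real.sqrt (1 + x * Real.sin φ ^ 2))
    (F' := fun x φ => Real.sin φ ^ 2 / (2 * Real.sqrt (1 + x * Real.sin φ ^ 2)))
    (bound := fun _ => 1) (Ioi_mem_nhds hκ)
    (Filter.Eventually.of_forall fun x =>
      (by fun_prop : Continuous fun φ : ℝ =>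
        Real.sqrt (1 + x * Real.sin φ ^ 2)).aestronglyMeasurable)
    ((by fun_prop : Continuous fun φ : ℝ =>
        Real.sqrt (1 + κ * Real.sin φ ^ 2)).intervalIntegrable _ _)
    hcont.aestronglyMeasurable
    (Filter.Eventually.of_forall fun φ _ x (hx : 0 < x) => by
      have h1 : 1 ≤ Real.sqrt (1 + x * Real.sin φ ^ 2) := by
        rw [Real.one_le_sqrt]
        have : 0 ≤ x * Real.sin φ ^ 2 := by positivity
        linarith
      rw [Real.norm_of_nonneg (by positivity), div_le_one (by positivity)]
      linarith [Real.sin_sq_le_one φ])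
    (by simp)
    (Filter.Eventually.of_forall fun φ _ x (hx : 0 < x) => by
      have h := (((hasDerivAt_id x).mul_const (Real.sin φ ^ 2)).const_add 1).sqrt
        (one_add_mul_sin_sq_pos hx.le φ).ne'
      simpa using h)
  refine key.2.congr_deriv ?_
  rw [Eell, Fell, ← intervalIntegral.integral_sub
    ((by fun_prop : Continuous fun φ : ℝ =>
        Real.sqrt (1 + κ * Real.sin φ ^ 2)).intervalIntegrable _ _)
    ((continuous_Fell_integrand hκ.le).intervalIntegrable _ _),
    ← intervalIntegral.integral_div]
  congr 1
  ext φ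
  have hp := one_add_mul_sin_sq_pos hκ.le φ
  have hs := Real.sqrt_pos.2 hp
  have hq := Real.sq_sqrt hp.le
  set t := Real.sqrt (1 + κ * Real.sin φ ^ 2)
  field_simp
  linarith

/-- Equivalent to the derivative of `E(κ)/√(2+κ)` being negative. The comparison function
`κ/c (sin²φ - 1/2)`, with `c = √(1 + κ/2)`, is `(t² - c²)/c` for `t = √(1 + κ sin²φ)`. -/
theorem Eell_lt {κ : ℝ} (hκ : 0 < κ) : Eell κ < (1 + κ / 2) * Fell κ := by
  set c := Real.sqrt (1 + κ / 2) with hc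
  have hc2 : c ^ 2 = 1 + κ / 2 := Real.sq_sqrt (by positivity)
  have hcpos : 0 < c := Real.sqrt_pos.2 (by positivity)
  have hFc := continuous_Fell_integrand hκ.le
  have hEc : Continuous fun φ : ℝ => Real.sqrt (1 + κ * Real.sin φ ^ 2) := by fun_prop
  have hGc : Continuous fun φ : ℝ => κ / c * (Real.sin φ ^ 2 - 1 / 2) := by fun_prop
  have hlt : (∫ φ in (0:ℝ)..(π / 2), (Real.sqrt (1 + κ * Real.sin φ ^ 2) -
      (1 + κ / 2) * (1 / Real.sqrt (1 + κ * Real.sin φ ^ 2)))) <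
      ∫ φ in (0:ℝ)..(π / 2), κ / c * (Real.sin φ ^ 2 - 1 / 2) := by
    refine intervalIntegral.integral_lt_integral_of_continuousOn_of_le_of_exists_lt
      (by positivity) (hEc.sub (hFc.const_mul _)).continuousOn hGc.continuousOn
      (fun φ _ => ?_) ⟨0, ⟨le_rfl, by positivity⟩, ?_⟩
    · have hp := one_add_mul_sin_sq_pos hκ.le φ
      have hs := Real.sqrt_pos.2 hp
      have hq := Real.sq_sqrt hp.le
      set t := Real.sqrt (1 + κ * Real.sin φ ^ 2)
      have e : κ / c * (Real.sin φ ^ 2 - 1 / 2) - (t - (1 + κ / 2) * (1 / t)) =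
          (t - c) ^ 2 * (t + c) / (t * c) := by
        have e1 : κ / c * (Real.sin φ ^ 2 - 1 / 2) = (t ^ 2 - c ^ 2) / c := by
          rw [hq, hc2]; ring
        rw [e1, ← hc2]
        field_simp
        ring
      have : 0 ≤ (t - c) ^ 2 * (t + c) / (t * c) := by positivity
      linarith
    · have hc1 : 1 < c := by
        rw [hc, Real.lt_sqrt one_pos.le]; linarith
      have e : κ / c * (-(1 / 2)) = (1 - c ^ 2) / c := by rw [hc2]; ring
      simp only [Real.sin_zero, ne_eq, OfNat.ofNat_ne_zero, not_false_eq_true, zero_pow, mul_zero,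
        add_zero, Real.sqrt_one, zero_sub, div_one, mul_one]
      rw [e, ← hc2, lt_div_iff₀ hcpos]
      nlinarith
  have hG : ∫ φ in (0:ℝ)..(π / 2), κ / c * (Real.sin φ ^ 2 - 1 / 2) = 0 := by
    rw [intervalIntegral.integral_const_mul, intervalIntegral.integral_sub
      ((by fun_prop : Continuous fun φ : ℝ => Real.sin φ ^ 2).intervalIntegrable _ _)
      (by simp), integral_sin_sq]
    simp
    right
    ring
  rw [hG, intervalIntegral.integral_sub (hEc.intervalIntegrable _ _)
    ((hFc.const_mul _).intervalIntegrable _ _), intervalIntegral.integral_const_mul] at hlt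
  unfold Eell Fell
  linarith

theorem Eell_div_sqrt_strictAnti :
    StrictAntiOn (fun κ : ℝ => Eell κ / Real.sqrt (2 + κ)) (Set.Ici 0) ∧
    ∀ κ : ℝ, 0 < κ →
      HasDerivAt (fun κ : ℝ => Eell κ / Real.sqrt (2 + κ))
        ((Eell κ - (1 + κ / 2) * Fell κ) / (κ * (2 + κ) ^ ((3:ℝ) / 2))) κ ∧
      (Eell κ - (1 + κ / 2) * Fell κ) / (κ * (2 + κ) ^ ((3:ℝ) / 2)) < 0 := by
  have main : ∀ κ : ℝ, 0 < κ →
      HasDerivAt (fun κ : ℝ => Eell κ / Real.sqrt (2 + κ))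
        ((Eell κ - (1 + κ / 2) * Fell κ) / (κ * (2 + κ) ^ ((3:ℝ) / 2))) κ ∧
      (Eell κ - (1 + κ / 2) * Fell κ) / (κ * (2 + κ) ^ ((3:ℝ) / 2)) < 0 := by
    intro κ hκ
    have h2 : 0 < 2 + κ := by positivity
    have hs := Real.sqrt_pos.2 h2
    have hq := Real.sq_sqrt h2.le
    have hr : (2 + κ) ^ ((3:ℝ) / 2) = (2 + κ) * Real.sqrt (2 + κ) := by
      rw [show (3:ℝ) / 2 = 1 + 1 / 2 by norm_num, Real.rpow_add h2, Real.rpow_one,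
        Real.sqrt_eq_rpow]
    constructor
    · have h := (hasDerivAt_Eell hκ).div (((hasDerivAt_id κ).const_add 2).sqrt h2.ne') hs.ne'
      refine h.congr_deriv ?_
      simp only [id]
      rw [hr, hq]
      field_simp
      rw [hq]
      ring
    · exact div_neg_of_neg_of_pos (by linarith [Eell_lt hκ]) (by positivity)
  refine ⟨strictAntiOn_of_deriv_neg (convex_Ici 0) ?_ fun x hx => ?_, main⟩
  · refine continuous_Eell.continuousOn.div (by fun_prop) fun x (hx : 0 ≤ x) => ?_
    exact (Real.sqrt_pos.2 (by positivity)).ne'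
  · rw [interior_Ici] at hx
    rw [(main x hx).1.deriv]
    exact (main x hx).2
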